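/- Let P be an isolated singular point of a one-dimensional foliation of ℙ², with Milnor number μ_P and multiplicity e_P. Since the singular locus is locally cut out by two equations whose ideal is contained in the e_P-th power of the maximal ideal, μ_P ≥ (e_P² + 3e_P − 2)/2. In commutative-algebra terms: if R is the local ring of ℙ² at P (a 2-dimensional regular local ring with maximal ideal 𝔪) and I = (f,g) ⊂ 𝔪^e is an 𝔪-primary ideal generated by two elements, then length(R/I) ≥ (e² + 3e − 2)/2 = binom(e+1,2) + e − 1. -/

import Mathlib

open IsLocalRing in
/-- In a two-dimensional Noetherian local ring, the maximal ideal is not contained in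
the radical of a principal ideal generated by one of its elements. -/
lemma maximalIdeal_not_le_radical_span_singleton {R : Type*} [CommRing R] [IsNoetherianRing R]
    [IsLocalRing R] (hdim : ringKrullDim R = 2) {z : R} (hz : z ∈ maximalIdeal R) :
    ¬ maximalIdeal R ≤ (Ideal.span {z}).radical := by
  intro h
  have hmin : maximalIdeal R ∈ (Ideal.span {z}).minimalPrimes := by
    refine ⟨⟨inferInstance, (Ideal.span_singleton_le_iff_mem _).2 hz⟩, fun q hq _ => ?_⟩
    exact h.trans ((hq.1.radical_le_iff).2 hq.2)
  have h1 := Ideal.height_le_one_of_isPrincipal_of_mem_minimalPrimes _ _ hmin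
  have h2 := maximalIdeal_height_eq_ringKrullDim (R := R)
  rw [hdim] at h2
  have h3 : (maximalIdeal R).height = 2 := WithBot.coe_injective h2
  rw [h3] at h1
  exact absurd h1 (by decide)

open IsLocalRing in
/-- The monomials of degree `n` in two generators of the maximal ideal of a two-dimensional local
ring with infinite residue field are linearly independent modulo `𝔪 ^ (n + 1)`. -/
lemma coeff_mem_maximalIdeal_of_sum_monomial_mem {R : Type*} [CommRing R] [IsNoetherianRing R]
    [IsLocalRing R] [Infinite (ResidueField R)] (hdim : ringKrullDim R = 2) {x y : R}
    (hxy : maximalIdeal R = Ideal.span {x, y}) {n : ℕ} (a : Fin (n + 1) → R)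
    (ha : ∑ j, a j * (x ^ (n - j : ℕ) * y ^ (j : ℕ)) ∈ maximalIdeal R ^ (n + 1))
    (j : Fin (n + 1)) : a j ∈ maximalIdeal R := by
  by_contra hj
  have hx : x ∈ maximalIdeal R := hxy ▸ Ideal.subset_span (by simp)
  have hy : y ∈ maximalIdeal R := hxy ▸ Ideal.subset_span (by simp)
  let p : Polynomial (ResidueField R) := ∑ i : Fin (n + 1), Polynomial.monomial (i : ℕ) (residue R (a i))
  have hp : p ≠ 0 := by
    intro h
    have hc : p.coeff j = residue R (a j) := by
      simp [p, Polynomial.finsetSum_coeff, Polynomial.coeff_monomial, Fin.val_inj]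
    rw [h, Polynomial.coeff_zero, eq_comm, residue_eq_zero_iff] at hc
    exact hj hc
  obtain ⟨c, hc⟩ : ∃ c, p.eval c ≠ 0 := by
    by_contra! h
    exact hp (Polynomial.funext (by simpa using h))
  obtain ⟨r, rfl⟩ := residue_surjective c
  have hu : IsUnit (∑ i, a i * r ^ (i : ℕ)) := by
    rw [← residue_ne_zero_iff_isUnit]
    simpa [p, Polynomial.eval_finsetSum] using hc
  let q := Ideal.Quotient.mk (Ideal.span {y - r * x})
  have hqy : q y = q r * q x := by
    rw [← map_mul, Ideal.Quotient.eq]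
    exact Ideal.mem_span_singleton_self _
  have hqm : (maximalIdeal R).map q = Ideal.span {q x} := by
    rw [hxy, Ideal.map_span, Set.image_pair, hqy]
    refine le_antisymm (Ideal.span_le.2 ?_) (Ideal.span_mono (by simp))
    rintro _ (rfl | rfl)
    · exact Ideal.mem_span_singleton_self _
    · exact Ideal.mul_mem_left _ _ (Ideal.mem_span_singleton_self _)
  have hsum : q (∑ j, a j * (x ^ (n - j : ℕ) * y ^ (j : ℕ))) =
      q (∑ i, a i * r ^ (i : ℕ)) * q x ^ n := by
    simp only [map_sum, map_mul, map_pow, hqy, Finset.sum_mul]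
    refine Finset.sum_congr rfl fun i _ => ?_
    have hi : q x ^ n = q x ^ (n - i : ℕ) * q x ^ (i : ℕ) := by
      rw [← pow_add, Nat.sub_add_cancel (by omega)]
    rw [hi]
    ring
  have hmem := Ideal.mem_map_of_mem q ha
  rw [Ideal.map_pow, hqm, Ideal.span_singleton_pow, hsum, Ideal.mem_span_singleton'] at hmem
  obtain ⟨s, hs⟩ := hmem
  obtain ⟨s, rfl⟩ := Ideal.Quotient.mk_surjective s
  have hv : IsUnit (∑ i, a i * r ^ (i : ℕ) - s * x) := by
    by_contra h
    refine (mem_maximalIdeal _).1 ?_ hu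
    simpa using add_mem ((mem_maximalIdeal _).2 h) (Ideal.mul_mem_left _ s hx)
  have hzero : q (∑ i, a i * r ^ (i : ℕ) - s * x) * q x ^ n = 0 := by
    rw [map_sub, sub_mul, ← hs, map_mul, pow_succ]
    ring
  rw [(hv.map q).mul_right_eq_zero, ← map_pow, Ideal.Quotient.eq_zero_iff_mem] at hzero
  refine maximalIdeal_not_le_radical_span_singleton hdim
    (sub_mem hy (Ideal.mul_mem_left _ r hx)) ?_
  have hxr : x ∈ (Ideal.span {y - r * x}).radical := ⟨n, hzero⟩
  rw [hxy, Ideal.span_le, Set.insert_subset_iff, Set.singleton_subset_iff]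
  refine ⟨hxr, ?_⟩
  simpa using add_mem (Ideal.le_radical (Ideal.mem_span_singleton_self (y - r * x)))
    (Ideal.mul_mem_left _ r hxr)

open IsLocalRing in
/-- The Hilbert–Samuel function of a two-dimensional regular local ring is at least
`n ↦ (n + 1).choose 2`. -/
lemma choose_le_length_quotient_maximalIdeal_pow {R : Type*} [CommRing R] [IsNoetherianRing R]
    [IsLocalRing R] [Infinite (ResidueField R)] (hdim : ringKrullDim R = 2) {x y : R}
    (hxy : maximalIdeal R = Ideal.span {x, y}) (n : ℕ) :
    ((n + 1).choose 2 : ℕ∞) ≤ Module.length R (R ⧸ maximalIdeal R ^ n) := by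
  induction n with
  | zero => simp
  | succ n ih =>
    have hx : x ∈ maximalIdeal R := hxy ▸ Ideal.subset_span (by simp)
    have hy : y ∈ maximalIdeal R := hxy ▸ Ideal.subset_span (by simp)
    have hmon (j : Fin (n + 1)) : x ^ (n - j : ℕ) * y ^ (j : ℕ) ∈ maximalIdeal R ^ n := by
      have h := Ideal.mul_mem_mul (Ideal.pow_mem_pow hx (n - j : ℕ)) (Ideal.pow_mem_pow hy (j : ℕ))
      rwa [← pow_add, Nat.sub_add_cancel (by omega)] at h
    let π : (R ⧸ maximalIdeal R ^ (n + 1)) →ₗ[R] (R ⧸ maximalIdeal R ^ n) :=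
      Submodule.factor (Ideal.pow_le_pow_right n.le_succ)
    have hπ : Function.Surjective π := Submodule.factor_surjective _
    let φ (j : Fin (n + 1)) : (R ⧸ maximalIdeal R) →ₗ[R] (R ⧸ maximalIdeal R ^ (n + 1)) :=
      Submodule.mapQ _ _ (LinearMap.toSpanSingleton R R (x ^ (n - j : ℕ) * y ^ (j : ℕ)))
        fun m hm => by
          simpa [pow_succ'] using Ideal.mul_mem_mul hm (hmon j)
    let ψ : (Fin (n + 1) → R ⧸ maximalIdeal R) →ₗ[R] (R ⧸ maximalIdeal R ^ (n + 1)) :=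
      ∑ j, (φ j).comp (LinearMap.proj j)
    have hψ (a : Fin (n + 1) → R) : ψ (fun j => Submodule.Quotient.mk (a j)) =
        Submodule.Quotient.mk (∑ j, a j * (x ^ (n - j : ℕ) * y ^ (j : ℕ))) := by
      simp only [ψ, φ, LinearMap.sum_apply, LinearMap.comp_apply, LinearMap.proj_apply,
        Submodule.mapQ_apply, LinearMap.toSpanSingleton_apply, smul_eq_mul]
      exact (map_sum (Submodule.mkQ (maximalIdeal R ^ (n + 1))) _ _).symm
    have hlift (v : Fin (n + 1) → R ⧸ maximalIdeal R) :
        ∃ a : Fin (n + 1) → R, v = fun j => Submodule.Quotient.mk (a j) := by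
      choose a ha using fun j => Submodule.Quotient.mk_surjective _ (v j)
      exact ⟨a, funext fun j => (ha j).symm⟩
    have hinj : Function.Injective ψ := by
      rw [← LinearMap.ker_eq_bot, LinearMap.ker_eq_bot']
      intro v hv
      obtain ⟨a, rfl⟩ := hlift v
      rw [hψ, Submodule.Quotient.mk_eq_zero] at hv
      funext j
      exact (Submodule.Quotient.mk_eq_zero _).2
        (coeff_mem_maximalIdeal_of_sum_monomial_mem hdim hxy a hv j)
    have hker (v) : ψ v ∈ LinearMap.ker π := by
      obtain ⟨a, rfl⟩ := hlift v
      rw [hψ, LinearMap.mem_ker]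
      refine (Submodule.Quotient.mk_eq_zero (maximalIdeal R ^ n)).2 ?_
      rw [LinearMap.id_apply]
      exact Submodule.sum_mem (maximalIdeal R ^ n) fun j _ => Ideal.mul_mem_left _ _ (hmon j)
    have hlen : ((n + 1 : ℕ) : ℕ∞) ≤ Module.length R (LinearMap.ker π) := by
      have hsimple : IsSimpleModule R (R ⧸ maximalIdeal R) :=
        isSimpleModule_iff_isCoatom.2 (maximalIdeal.isMaximal R).out
      have h := Module.length_le_of_injective (ψ.codRestrict _ hker)
        ((LinearMap.injective_codRestrict_iff _).2 hinj)
      simpa [Module.length_pi, Module.length_eq_one] using h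
    rw [Module.length_eq_add_of_exact (LinearMap.ker π).subtype π (Subtype.val_injective) hπ
      (LinearMap.exact_subtype_ker_map π), Nat.choose_succ_succ' (n + 1) 1, Nat.choose_one_right,
      Nat.cast_add]
    exact add_le_add hlen ih

open IsLocalRing in
/-- An ideal generated by two elements of `𝔪 ^ e` has colength at least that of `𝔪 ^ (e + 1)`
minus two. -/
lemma length_quotient_maximalIdeal_pow_succ_le {R : Type*} [CommRing R] [IsLocalRing R] {e : ℕ}
    {f g : R} (hf : f ∈ maximalIdeal R ^ e) (hg : g ∈ maximalIdeal R ^ e) :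
    Module.length R (R ⧸ maximalIdeal R ^ (e + 1)) ≤
      2 + Module.length R (R ⧸ Ideal.span {f, g}) := by
  let φ (z : R) (hz : z ∈ maximalIdeal R ^ e) :
      (R ⧸ maximalIdeal R) →ₗ[R] (R ⧸ maximalIdeal R ^ (e + 1)) :=
    Submodule.mapQ _ _ (LinearMap.toSpanSingleton R R z)
      fun m hm => by simpa [pow_succ'] using Ideal.mul_mem_mul hm hz
  let ψ := (φ f hf).coprod (φ g hg)
  have hsimple : IsSimpleModule R (R ⧸ maximalIdeal R) :=
    isSimpleModule_iff_isCoatom.2 (maximalIdeal.isMaximal R).out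
  have hrange : Module.length R (LinearMap.range ψ) ≤ 2 := by
    have h := Module.length_le_of_surjective ψ.rangeRestrict ψ.surjective_rangeRestrict
    rwa [Module.length_prod, Module.length_eq_one R (R ⧸ maximalIdeal R), one_add_one_eq_two] at h
  have hle : Ideal.span {f, g} ≤
      LinearMap.ker ((LinearMap.range ψ).mkQ.comp (Submodule.mkQ (maximalIdeal R ^ (e + 1)))) := by
    rw [Ideal.span_le, Set.insert_subset_iff, Set.singleton_subset_iff]
    constructor
    · refine (Submodule.Quotient.mk_eq_zero _).2 ⟨(Submodule.Quotient.mk 1, 0), ?_⟩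
      rw [LinearMap.coprod_apply, map_zero, add_zero, Submodule.mapQ_apply,
        LinearMap.toSpanSingleton_apply, one_smul, Submodule.mkQ_apply]
    · refine (Submodule.Quotient.mk_eq_zero _).2 ⟨(0, Submodule.Quotient.mk 1), ?_⟩
      rw [LinearMap.coprod_apply, map_zero, zero_add, Submodule.mapQ_apply,
        LinearMap.toSpanSingleton_apply, one_smul, Submodule.mkQ_apply]
  have hquot := Module.length_le_of_surjective (Submodule.liftQ _ _ hle) (by
    rw [← LinearMap.range_eq_top, Submodule.range_liftQ, LinearMap.range_eq_top]
    exact (Submodule.mkQ_surjective _).comp (Submodule.mkQ_surjective _))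
  rw [Module.length_eq_add_of_exact (LinearMap.range ψ).subtype (LinearMap.range ψ).mkQ
    Subtype.val_injective (Submodule.mkQ_surjective _) (LinearMap.exact_subtype_mkQ _)]
  exact add_le_add hrange hquot


/-- Let R be a 2-dimensional regular local ring over an algebraically closed field
(Noetherian local, maximal ideal generated by two elements, Krull dimension 2),
e ≥ 1, and I = (f,g) an 𝔪-primary ideal with f, g ∈ 𝔪^e.  Then the length of R/I
(the Krull dimension of its lattice of submodules) is at least
binom(e+1,2) + e − 1 = (e² + 3e − 2)/2. -/
theorem stmt_7 (k R : Type) [Field k] [IsAlgClosed k]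
    [CommRing R] [IsNoetherianRing R] [IsLocalRing R] [Algebra k R]
    (hreg : ∃ x y : R, IsLocalRing.maximalIdeal R = Ideal.span {x, y})
    (hdim : ringKrullDim R = 2)
    (e : ℕ) (he : 1 ≤ e) (f g : R)
    (hf : f ∈ IsLocalRing.maximalIdeal R ^ e)
    (hg : g ∈ IsLocalRing.maximalIdeal R ^ e)
    (hne : Ideal.span {f, g} ≠ ⊤)
    (hprimary : IsLocalRing.maximalIdeal R ≤ (Ideal.span {f, g}).radical) :
    ((((e + 1).choose 2 + e - 1 : ℕ) : WithBot ℕ∞)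
        ≤ Order.krullDim (Submodule R (R ⧸ Ideal.span {f, g})))
    ∧ (e + 1).choose 2 + e - 1 = (e ^ 2 + 3 * e - 2) / 2 := by
  have hchoose : (e + 2).choose 2 = (e + 1).choose 2 + e - 1 + 2 := by
    rw [Nat.choose_succ_succ' (e + 1) 1, Nat.choose_one_right, one_add_one_eq_two]
    omega
  constructor
  · obtain ⟨x, y, hxy⟩ := hreg
    have : Infinite k := IsAlgClosed.instInfinite
    have : Infinite (IsLocalRing.ResidueField R) :=
      Infinite.of_injective _ (algebraMap k (IsLocalRing.ResidueField R)).injective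
    have h := (choose_le_length_quotient_maximalIdeal_pow hdim hxy (e + 1)).trans
      (length_quotient_maximalIdeal_pow_succ_le hf hg)
    rw [hchoose, Nat.cast_add, add_comm, Nat.cast_ofNat,
      ENat.add_le_add_iff_left (by decide)] at h
    rw [← Module.coe_length]
    exact WithBot.coe_le_coe.2 h
  · have htri : (e + 1).choose 2 * 2 = e * (e + 1) := by
      rw [Nat.choose_two_right, Nat.add_sub_cancel, mul_comm (e + 1) e]
      exact Nat.div_mul_cancel (Nat.even_mul_succ_self e).two_dvd
    rw [eq_comm, Nat.div_eq_iff_eq_mul_left two_pos]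
    all_goals grind
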